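/- For α ∈ (0,1) there is a constant c(α) such that for every n ≥ 2, ∫_{G_m²} |∑_{i=1}^{n} A_{n−i}^{−α−1} D_i(u) D_i(v)| dμ(u,v) ≤ c(α) log n. -/

import Mathlib

open MeasureTheory Finset
open scoped ENNReal NNReal

noncomputable section

/-- Discrete measurable structure on each finite cyclic factor. -/
instance (n : ℕ) : MeasurableSpace (ZMod n) := ⊤

/-- The Vilenkin group determined by the generating sequence `m`. -/
abbrev Vil (m : ℕ → ℕ) : Type := ∀ k, ZMod (m k)

/-- Generalized numbers `M_k`. -/
def Mgen (m : ℕ → ℕ) : ℕ → ℕ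
  | 0 => 1
  | k + 1 => m k * Mgen m k

/-- `j`-th digit of `n` in the generalized number system. -/
def vdigit (m : ℕ → ℕ) (n j : ℕ) : ℕ := (n / Mgen m j) % m j

/-- Vilenkin functions `ψ_n = ∏ r_k^{n_k}`. -/
def vpsi (m : ℕ → ℕ) (n : ℕ) (x : Vil m) : ℂ :=
  ∏ k ∈ Finset.range (n + 1),
    Complex.exp (2 * Real.pi * Complex.I * ((x k).val : ℂ) / (m k : ℂ)) ^ vdigit m n k

/-- Vilenkin–Dirichlet kernels `D_n = ∑_{k<n} ψ_k`. -/
def vD (m : ℕ → ℕ) (n : ℕ) (x : Vil m) : ℂ := ∑ k ∈ Finset.range n, vpsi m k x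

/-- Cesàro numbers `A_n^α = ∏_{j=1}^n (α+j) / n!` (so `A_0^α = 1`). -/
def ces (α : ℝ) (n : ℕ) : ℝ := (∏ j ∈ Finset.range n, (α + j + 1)) / n.factorial

/-- The normalized "absolute value" `|u| = ∑_j u_j / M_{j+1}` on a Vilenkin group. -/
def vabs (m : ℕ → ℕ) (u : Vil m) : ℝ := ∑' j, ((u j).val : ℝ) / Mgen m (j + 1)

/-- Standard subgroup `I_n = {y : y_0 = ⋯ = y_{n-1} = 0}`. -/
def In (m : ℕ → ℕ) (n : ℕ) : Set (Vil m) := {u | ∀ j < n, u j = 0}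

/-! ### Digits and characters -/

theorem Mgen_pos {m : ℕ → ℕ} (hm : ∀ k, 2 ≤ m k) (j : ℕ) : 0 < Mgen m j := by
  induction j with
  | zero => simp [Mgen]
  | succ j ih => exact Nat.mul_pos (by linarith [hm j]) ih

theorem two_pow_le_Mgen {m : ℕ → ℕ} (hm : ∀ k, 2 ≤ m k) (j : ℕ) : 2 ^ j ≤ Mgen m j := by
  induction j with
  | zero => simp [Mgen]
  | succ j ih => rw [pow_succ, mul_comm]; exact Nat.mul_le_mul (hm j) ih

theorem Mgen_dvd (m : ℕ → ℕ) {i j : ℕ} (h : i ≤ j) : Mgen m i ∣ Mgen m j := by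
  induction j, h using Nat.le_induction with
  | base => exact dvd_rfl
  | succ j _ ih => exact ih.trans (Dvd.intro_left _ rfl)

theorem vdigit_eq_zero_of_lt {m : ℕ → ℕ} {n j : ℕ} (h : n < Mgen m j) : vdigit m n j = 0 := by
  simp [vdigit, Nat.div_eq_of_lt h]

theorem vdigit_mul_Mgen_of_lt {m : ℕ → ℕ} (hm : ∀ k, 2 ≤ m k) {l j : ℕ} (h : l < j) (q : ℕ) :
    vdigit m (q * Mgen m j) l = 0 := by
  obtain ⟨t, ht⟩ := Mgen_dvd m (Nat.succ_le_of_lt h)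
  have e : q * Mgen m j = (q * t * m l) * Mgen m l := by
    rw [ht, Nat.succ_eq_add_one, Mgen]; ring
  rw [vdigit, e, Nat.mul_div_cancel _ (Mgen_pos hm l), Nat.mul_mod_left]

theorem vdigit_mul_Mgen_add {m : ℕ → ℕ} (hm : ∀ k, 2 ≤ m k) {i j : ℕ} (hi : i < Mgen m j)
    (q l : ℕ) : vdigit m (q * Mgen m j + i) l = vdigit m (q * Mgen m j) l + vdigit m i l := by
  rcases lt_or_ge l j with h | h
  · rw [vdigit_mul_Mgen_of_lt hm h]
    obtain ⟨t, ht⟩ := Mgen_dvd m (Nat.succ_le_of_lt h)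
    have e : q * Mgen m j + i = i + (q * t * m l) * Mgen m l := by
      rw [ht, Nat.succ_eq_add_one, Mgen]; ring
    rw [vdigit, e, Nat.add_mul_div_right _ _ (Mgen_pos hm l), Nat.add_mul_mod_self_right, zero_add,
      vdigit]
  · obtain ⟨t, ht⟩ := Mgen_dvd m h
    have hl : i < Mgen m l := hi.trans_le (Nat.le_of_dvd (Mgen_pos hm l) (Mgen_dvd m h))
    rw [vdigit_eq_zero_of_lt hl, add_zero, vdigit, vdigit, ht, ← Nat.div_div_eq_div_mul,
      ← Nat.div_div_eq_div_mul, Nat.mul_div_cancel _ (Mgen_pos hm j), add_comm,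
      Nat.add_mul_div_right _ _ (Mgen_pos hm j), Nat.div_eq_of_lt hi, zero_add]

/-- The generalized Rademacher function `r_k`. -/
def vrad (m : ℕ → ℕ) (k : ℕ) (x : Vil m) : ℂ :=
  Complex.exp (2 * Real.pi * Complex.I * ((x k).val : ℂ) / (m k : ℂ))

theorem vpsi_eq_prod_vrad {m : ℕ → ℕ} (hm : ∀ k, 2 ≤ m k) {n N : ℕ} (h : n < N) (x : Vil m) :
    vpsi m n x = ∏ k ∈ range N, vrad m k x ^ vdigit m n k := by
  refine Finset.prod_subset (Finset.range_subset_range.2 h) fun k _ hk => ?_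
  have hk' : n < k := by simpa using hk
  rw [vdigit_eq_zero_of_lt (hk'.trans (Nat.lt_two_pow_self.trans_le (two_pow_le_Mgen hm k))),
    pow_zero]

theorem norm_vrad (m : ℕ → ℕ) (k : ℕ) (x : Vil m) : ‖vrad m k x‖ = 1 := by
  have e : (2 * Real.pi * Complex.I * ((x k).val : ℂ) / (m k : ℂ)) =
      ((2 * Real.pi * (x k).val / m k : ℝ) : ℂ) * Complex.I := by
    push_cast; ring
  rw [vrad, e, Complex.norm_exp_ofReal_mul_I]

theorem norm_vpsi (m : ℕ → ℕ) (n : ℕ) (x : Vil m) : ‖vpsi m n x‖ = 1 := by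
  rw [vpsi, norm_prod]
  refine Finset.prod_eq_one fun k _ => ?_
  rw [norm_pow]
  exact (congrArg (· ^ _) (norm_vrad m k x)).trans (one_pow _)

theorem vpsi_mul_Mgen_add {m : ℕ → ℕ} (hm : ∀ k, 2 ≤ m k) {i j : ℕ} (hi : i < Mgen m j)
    (q : ℕ) (x : Vil m) :
    vpsi m (q * Mgen m j + i) x = vpsi m (q * Mgen m j) x * vpsi m i x := by
  have h : q * Mgen m j + i < q * Mgen m j + i + 1 := Nat.lt_succ_self _
  rw [vpsi_eq_prod_vrad hm h, vpsi_eq_prod_vrad hm (n := q * Mgen m j) (N := q * Mgen m j + i + 1) (by omega),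
    vpsi_eq_prod_vrad hm (n := i) (N := q * Mgen m j + i + 1) (by omega), ← Finset.prod_mul_distrib]
  simp only [vdigit_mul_Mgen_add hm hi, pow_add]

theorem vpsi_mul_Mgen_of_lt {m : ℕ → ℕ} (hm : ∀ k, 2 ≤ m k) {s j : ℕ} (hs : s < m j) (x : Vil m) :
    vpsi m (s * Mgen m j) x = vrad m j x ^ s := by
  rw [vpsi_eq_prod_vrad hm (N := s * Mgen m j + 1 + j) (by omega),
    Finset.prod_eq_single_of_mem j (by simp)]
  · rw [vdigit, Nat.mul_div_cancel _ (Mgen_pos hm j), Nat.mod_eq_of_lt hs]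
  · intro l _ hl
    rcases lt_or_gt_of_ne hl with h | h
    · rw [vdigit_mul_Mgen_of_lt hm h, pow_zero]
    · rw [vdigit_eq_zero_of_lt, pow_zero]
      calc s * Mgen m j < m j * Mgen m j := Nat.mul_lt_mul_of_pos_right hs (Mgen_pos hm j)
        _ = Mgen m (j + 1) := rfl
        _ ≤ Mgen m l := Nat.le_of_dvd (Mgen_pos hm l) (Mgen_dvd m h)

/-! ### Dirichlet kernels -/

theorem vD_mul_Mgen_add {m : ℕ → ℕ} (hm : ∀ k, 2 ≤ m k) {i j : ℕ} (hi : i ≤ Mgen m j)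
    (q : ℕ) (x : Vil m) :
    vD m (q * Mgen m j + i) x = vD m (q * Mgen m j) x + vpsi m (q * Mgen m j) x * vD m i x := by
  rw [vD, Finset.sum_range_add, vD, vD, Finset.mul_sum]
  congr 1
  refine Finset.sum_congr rfl fun k hk => vpsi_mul_Mgen_add hm ?_ q x
  exact (Finset.mem_range.1 hk).trans_le hi

theorem sum_vrad_pow_eq_zero {m : ℕ → ℕ} (hm : ∀ k, 2 ≤ m k) {j : ℕ} {x : Vil m}
    (hx : x j ≠ 0) : ∑ s ∈ range (m j), vrad m j x ^ s = 0 := by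
  have h0 : m j ≠ 0 := by have := hm j; omega
  have : NeZero (m j) := ⟨h0⟩
  have hζ := Complex.isPrimitiveRoot_exp (m j) h0
  have e : vrad m j x = Complex.exp (2 * Real.pi * Complex.I / (m j : ℂ)) ^ (x j).val := by
    rw [vrad, ← Complex.exp_nat_mul]; congr 1; ring
  have h1 : vrad m j x ≠ 1 := by
    rw [e, Ne, hζ.pow_eq_one_iff_dvd]
    intro hd
    have := Nat.eq_zero_of_dvd_of_lt hd (ZMod.val_lt _)
    exact hx ((ZMod.val_eq_zero _).1 this)
  rw [geom_sum_eq h1, e, ← pow_mul, mul_comm (x j).val, pow_mul, hζ.pow_eq_one, one_pow, sub_self, zero_div]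

theorem vD_mul_Mgen {m : ℕ → ℕ} (hm : ∀ k, 2 ≤ m k) {s j : ℕ} (hs : s ≤ m j) (x : Vil m) :
    vD m (s * Mgen m j) x = (∑ t ∈ range s, vrad m j x ^ t) * vD m (Mgen m j) x := by
  induction s with
  | zero => simp [vD]
  | succ s ih =>
    rw [Nat.succ_mul, vD_mul_Mgen_add hm le_rfl, ih (by omega), vpsi_mul_Mgen_of_lt hm (by omega),
      Finset.sum_range_succ, add_mul]

theorem vD_Mgen_eq_zero {m : ℕ → ℕ} (hm : ∀ k, 2 ≤ m k) {j : ℕ} {x : Vil m} (hx : x ∉ In m j) :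
    vD m (Mgen m j) x = 0 := by
  induction j with
  | zero => simp [In] at hx
  | succ j ih =>
    rw [Mgen, vD_mul_Mgen hm le_rfl]
    by_cases h : x ∈ In m j
    · rw [sum_vrad_pow_eq_zero hm, zero_mul]
      intro h0
      refine hx fun l hl => ?_
      rcases Nat.lt_succ_iff_lt_or_eq.1 hl with h' | rfl
      exacts [h l h', h0]
    · rw [ih h, mul_zero]

theorem norm_vD_le (m : ℕ → ℕ) (n : ℕ) (x : Vil m) : ‖vD m n x‖ ≤ n := by
  refine (norm_sum_le _ _).trans ?_
  simp [norm_vpsi]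

theorem measurable_vpsi (m : ℕ → ℕ) (n : ℕ) : Measurable (vpsi m n) := by
  refine Finset.measurable_prod _ fun k _ => Measurable.pow_const ?_ _
  exact (measurable_from_top (f := fun y : ZMod (m k) =>
    Complex.exp (2 * Real.pi * Complex.I * (y.val : ℂ) / (m k : ℂ)))).comp (measurable_pi_apply k)

theorem measurable_vD (m : ℕ → ℕ) (n : ℕ) : Measurable (vD m n) :=
  Finset.measurable_sum _ fun k _ => measurable_vpsi m k

theorem measurableSet_In (m : ℕ → ℕ) (j : ℕ) : MeasurableSet (In m j) := by
  have e : In m j = ⋂ l ∈ Set.Iio j, (fun u : Vil m => u l) ⁻¹' {0} := by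
    ext u; simp [In]
  rw [e]
  exact MeasurableSet.biInter (Set.to_countable _) fun l _ =>
    measurable_pi_apply l MeasurableSpace.measurableSet_top

theorem Mgen_mul_measure_In_le {m : ℕ → ℕ} (hm : ∀ k, 2 ≤ m k) (μ : Measure (Vil m))
    [IsProbabilityMeasure μ] [μ.IsAddLeftInvariant] (j : ℕ) :
    (Mgen m j : ℝ≥0∞) * μ (In m j) ≤ 1 := by
  induction j with
  | zero => simpa [Mgen] using prob_le_one
  | succ j ih =>
    refine le_trans ?_ ih
    have : NeZero (m j) := ⟨by have := hm j; omega⟩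
    have hmeas (g : Vil m) : Measurable (fun x : Vil m => g + x) :=
      measurable_pi_lambda _ fun l =>
        (measurable_from_top (f := fun y : ZMod (m l) => g l + y)).comp (measurable_pi_apply l)
    let T : ZMod (m j) → Set (Vil m) := fun s => (fun x => Pi.single j s + x) ⁻¹' In m (j + 1)
    have hT (s) : μ (T s) = μ (In m (j + 1)) := by
      have h := congrArg (fun ν : Measure (Vil m) => ν (In m (j + 1)))
        (map_add_left_eq_self μ (Pi.single j s))
      simpa only [Measure.map_apply (hmeas _) (measurableSet_In m _)] using h
    have hdisj : ((Finset.univ : Finset (ZMod (m j))) : Set (ZMod (m j))).PairwiseDisjoint T := by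
      intro s _ t _ hst
      refine Set.disjoint_left.2 fun x hs ht => hst ?_
      have h1 := hs j (Nat.lt_succ_self j)
      have h2 := ht j (Nat.lt_succ_self j)
      simp only [Pi.add_apply, Pi.single_eq_same] at h1 h2
      exact add_right_cancel (h1.trans h2.symm)
    have hsub : (⋃ s ∈ (Finset.univ : Finset (ZMod (m j))), T s) ⊆ In m j := by
      intro x hx l hl
      simp only [Set.mem_iUnion] at hx
      obtain ⟨s, -, hs⟩ := hx
      have := hs l (by omega)
      simpa [Pi.single_eq_of_ne hl.ne] using this
    have key : (m j : ℝ≥0∞) * μ (In m (j + 1)) ≤ μ (In m j) := by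
      calc (m j : ℝ≥0∞) * μ (In m (j + 1)) = ∑ s : ZMod (m j), μ (T s) := by
            simp [hT, ZMod.card]
        _ = μ (⋃ s ∈ (Finset.univ : Finset (ZMod (m j))), T s) :=
            (measure_biUnion_finset hdisj fun s _ => hmeas _ (measurableSet_In m _)).symm
        _ ≤ _ := measure_mono hsub
    calc (Mgen m (j + 1) : ℝ≥0∞) * μ (In m (j + 1))
        = Mgen m j * (m j * μ (In m (j + 1))) := by rw [Mgen]; push_cast; ring
      _ ≤ _ := by gcongr

theorem lintegral_vD_Mgen_le {m : ℕ → ℕ} (hm : ∀ k, 2 ≤ m k) (μ : Measure (Vil m))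
    [IsProbabilityMeasure μ] [μ.IsAddLeftInvariant] (j : ℕ) :
    ∫⁻ x, ‖vD m (Mgen m j) x‖ₑ ∂μ ≤ 1 := by
  calc ∫⁻ x, ‖vD m (Mgen m j) x‖ₑ ∂μ
      ≤ ∫⁻ x, (In m j).indicator (fun _ => (Mgen m j : ℝ≥0∞)) x ∂μ := by
        refine lintegral_mono fun x => ?_
        by_cases hx : x ∈ In m j
        · rw [Set.indicator_of_mem hx, ← ofReal_norm, ← ENNReal.ofReal_natCast]
          exact ENNReal.ofReal_le_ofReal (norm_vD_le m _ x)
        · simp [vD_Mgen_eq_zero hm hx]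
    _ ≤ 1 := by
        rw [lintegral_indicator_const (measurableSet_In m j)]
        exact Mgen_mul_measure_In_le hm μ j

theorem lintegral_enorm_add_le_of_le {X : Type*} [MeasurableSpace X] {μ : Measure X}
    {f g h : X → ℂ} {a b : ℝ≥0∞} (hg : Measurable g)
    (hfgh : ∀ x, ‖f x‖ ≤ ‖g x‖ + ‖h x‖) (ha : ∫⁻ x, ‖g x‖ₑ ∂μ ≤ a) (hb : ∫⁻ x, ‖h x‖ₑ ∂μ ≤ b) :
    ∫⁻ x, ‖f x‖ₑ ∂μ ≤ a + b := by
  calc ∫⁻ x, ‖f x‖ₑ ∂μ ≤ ∫⁻ x, ‖g x‖ₑ + ‖h x‖ₑ ∂μ := by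
        refine lintegral_mono fun x => ?_
        simp only [← ofReal_norm]
        rw [← ENNReal.ofReal_add (norm_nonneg _) (norm_nonneg _)]
        exact ENNReal.ofReal_le_ofReal (hfgh x)
    _ = ∫⁻ x, ‖g x‖ₑ ∂μ + ∫⁻ x, ‖h x‖ₑ ∂μ := lintegral_add_left hg.enorm _
    _ ≤ a + b := add_le_add ha hb

theorem lintegral_vD_mul_Mgen_le {m : ℕ → ℕ} (hm : ∀ k, 2 ≤ m k) (μ : Measure (Vil m))
    [IsProbabilityMeasure μ] [μ.IsAddLeftInvariant] (s j : ℕ) :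
    ∫⁻ x, ‖vD m (s * Mgen m j) x‖ₑ ∂μ ≤ s := by
  induction s with
  | zero => simp [vD]
  | succ s ih =>
    push_cast
    refine lintegral_enorm_add_le_of_le (measurable_vD m _) (fun x => ?_) ih
      (lintegral_vD_Mgen_le hm μ j)
    rw [Nat.succ_mul, vD_mul_Mgen_add hm le_rfl]
    refine (norm_add_le _ _).trans (le_of_eq ?_)
    rw [norm_mul, norm_vpsi, one_mul]

theorem lintegral_vD_le_of_le_Mgen {m : ℕ → ℕ} (hm : ∀ k, 2 ≤ m k) {Λ : ℕ} (hΛ : ∀ k, m k ≤ Λ)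
    (μ : Measure (Vil m)) [IsProbabilityMeasure μ] [μ.IsAddLeftInvariant] {j i : ℕ}
    (hi : i ≤ Mgen m j) : ∫⁻ x, ‖vD m i x‖ₑ ∂μ ≤ (Λ * j + 1 : ℕ) := by
  induction j generalizing i with
  | zero =>
    have h := lintegral_vD_mul_Mgen_le hm μ i 0
    simp only [Mgen, mul_one] at h hi
    exact h.trans (by simpa using hi)
  | succ j ih =>
    have hM := Mgen_pos hm j
    have hd := Nat.div_add_mod' i (Mgen m j)
    have hr := (Nat.mod_lt i hM).le
    have hq : i / Mgen m j ≤ Λ :=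
      (Nat.div_le_of_le_mul (by rw [mul_comm]; exact hi)).trans (hΛ j)
    have e : ((Λ * (j + 1) + 1 : ℕ) : ℝ≥0∞) = (Λ : ℝ≥0∞) + (Λ * j + 1 : ℕ) := by push_cast; ring
    rw [e]
    refine lintegral_enorm_add_le_of_le (measurable_vD m (i / Mgen m j * Mgen m j)) (fun x => ?_)
      ((lintegral_vD_mul_Mgen_le hm μ _ j).trans (by exact_mod_cast hq)) (ih hr)
    conv_lhs => rw [← hd, vD_mul_Mgen_add hm hr]
    refine (norm_add_le _ _).trans (le_of_eq ?_)
    rw [norm_mul, norm_vpsi, one_mul]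

theorem lintegral_vD_sub_le_of_le_Mgen {m : ℕ → ℕ} (hm : ∀ k, 2 ≤ m k) {Λ : ℕ}
    (hΛ : ∀ k, m k ≤ Λ) (μ : Measure (Vil m)) [IsProbabilityMeasure μ] [μ.IsAddLeftInvariant]
    {a b j : ℕ} (hab : a ≤ b) (hb : b ≤ a + Mgen m j) :
    ∫⁻ x, ‖vD m b x - vD m a x‖ₑ ∂μ ≤ (2 * Λ * j + 3 : ℕ) := by
  have hM := Mgen_pos hm j
  set q := a / Mgen m j with hq
  set r := a % Mgen m j with hr
  have hd : q * Mgen m j + r = a := Nat.div_add_mod' a (Mgen m j)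
  have hrM : r < Mgen m j := Nat.mod_lt a hM
  have ea (x) : vD m a x = vD m (q * Mgen m j) x + vpsi m (q * Mgen m j) x * vD m r x := by
    rw [← vD_mul_Mgen_add hm hrM.le, hd]
  have hI := lintegral_vD_le_of_le_Mgen hm hΛ μ hrM.le
  rcases le_or_gt b (q * Mgen m j + Mgen m j) with h | h
  · obtain ⟨t, rfl⟩ := Nat.exists_eq_add_of_le (show q * Mgen m j ≤ b by omega)
    have ht : t ≤ Mgen m j := by omega
    refine (lintegral_enorm_add_le_of_le (measurable_vD m t) (fun x => ?_)
      (lintegral_vD_le_of_le_Mgen hm hΛ μ ht) hI).trans ?_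
    · rw [vD_mul_Mgen_add hm ht, ea, add_sub_add_left_eq_sub, ← mul_sub, norm_mul, norm_vpsi,
        one_mul]
      exact norm_sub_le _ _
    · rw [← Nat.cast_add]; exact Nat.cast_le.2 (by linarith)
  · obtain ⟨t, rfl⟩ := Nat.exists_eq_add_of_le (show (q + 1) * Mgen m j ≤ b by linarith)
    have ht : t ≤ Mgen m j := by linarith
    refine (lintegral_enorm_add_le_of_le (g := vD m t)
      (h := fun x => vD m (Mgen m j) x - vD m r x) (measurable_vD m t) (fun x => ?_)
      (lintegral_vD_le_of_le_Mgen hm hΛ μ ht) (lintegral_enorm_add_le_of_le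
        (measurable_vD m (Mgen m j)) (fun x => norm_sub_le _ _)
        (lintegral_vD_Mgen_le hm μ j) hI)).trans ?_
    · rw [vD_mul_Mgen_add hm ht, ea, Nat.succ_mul, vD_mul_Mgen_add hm le_rfl]
      have e (c p d p' t r : ℂ) : c + p * d + p' * t - (c + p * r) = p' * t + p * (d - r) := by
        ring
      rw [e]
      refine (norm_add_le _ _).trans (le_of_eq ?_)
      rw [norm_mul, norm_mul, norm_vpsi, norm_vpsi, one_mul, one_mul]
    · exact_mod_cast (by linarith : Λ * j + 1 + (1 + (Λ * j + 1)) ≤ 2 * Λ * j + 3)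

theorem lintegral_vD_add_sub_le_log {m : ℕ → ℕ} (hm : ∀ k, 2 ≤ m k) {Λ : ℕ} (hΛ : ∀ k, m k ≤ Λ)
    (μ : Measure (Vil m)) [IsProbabilityMeasure μ] [μ.IsAddLeftInvariant] (a k : ℕ) :
    ∫⁻ x, ‖vD m (a + k) x - vD m a x‖ₑ ∂μ ≤
      ENNReal.ofReal ((4 * Λ + 3) * (1 + Real.log k)) := by
  have hkj : k ≤ Mgen m (Nat.log 2 k + 1) :=
    (Nat.lt_pow_succ_log_self one_lt_two k).le.trans (two_pow_le_Mgen hm _)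
  refine (lintegral_vD_sub_le_of_le_Mgen hm hΛ μ (Nat.le_add_right a k)
    (Nat.add_le_add_left hkj a)).trans ?_
  rw [← ENNReal.ofReal_natCast]
  refine ENNReal.ofReal_le_ofReal ?_
  push_cast
  have hlog : 0 ≤ Real.log k := Real.log_natCast_nonneg k
  have hL : (Nat.log 2 k : ℝ) ≤ 2 * Real.log k := by
    refine (Real.natLog_le_logb k 2).trans ?_
    rw [Real.logb, Nat.cast_ofNat, div_le_iff₀ (Real.log_pos one_lt_two)]
    nlinarith [Real.log_two_gt_d9]
  nlinarith [mul_le_mul_of_nonneg_left hL (Nat.cast_nonneg (α := ℝ) Λ),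
    Nat.cast_nonneg (α := ℝ) Λ]

theorem lintegral_vD_le_log {m : ℕ → ℕ} (hm : ∀ k, 2 ≤ m k) {Λ : ℕ} (hΛ : ∀ k, m k ≤ Λ)
    (μ : Measure (Vil m)) [IsProbabilityMeasure μ] [μ.IsAddLeftInvariant] (k : ℕ) :
    ∫⁻ x, ‖vD m k x‖ₑ ∂μ ≤ ENNReal.ofReal ((4 * Λ + 3) * (1 + Real.log k)) := by
  simpa [vD] using lintegral_vD_add_sub_le_log hm hΛ μ 0 k

/-! ### Cesàro numbers -/

theorem ces_succ (β : ℝ) (n : ℕ) : ces β (n + 1) = ces β n * ((β + n + 1) / (n + 1)) := by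
  rw [ces, ces, Finset.prod_range_succ, Nat.factorial_succ, div_mul_div_comm]
  push_cast
  rw [mul_comm ((n : ℝ) + 1)]

theorem ces_sub_one_succ (β : ℝ) (n : ℕ) : ces (β - 1) (n + 1) = β / (n + 1) * ces β n := by
  have h : (n : ℝ) + 1 ≠ 0 := by positivity
  rw [ces, ces, Finset.prod_range_succ', Nat.factorial_succ, div_mul_div_comm]
  have e : ∏ j ∈ range n, (β - 1 + ((j + 1 : ℕ) : ℝ) + 1) = ∏ j ∈ range n, (β + j + 1) :=
    Finset.prod_congr rfl fun j _ => by push_cast; ring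
  rw [e]
  push_cast
  ring

theorem sum_ces_sub_one (β : ℝ) (n : ℕ) : ∑ k ∈ range (n + 1), ces (β - 1) k = ces β n := by
  induction n with
  | zero => simp [ces]
  | succ n ih =>
    have h : (n : ℝ) + 1 ≠ 0 := by positivity
    rw [Finset.sum_range_succ, ih, ces_sub_one_succ, ces_succ]
    field_simp
    ring

theorem ces_neg_nonneg {α : ℝ} (h1 : α ≤ 1) (n : ℕ) : 0 ≤ ces (-α) n := by
  refine div_nonneg (Finset.prod_nonneg fun j _ => ?_) (Nat.cast_nonneg _)
  have : (0 : ℝ) ≤ j := Nat.cast_nonneg j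
  linarith

theorem ces_neg_le_rpow {α : ℝ} (h0 : 0 ≤ α) (h1 : α ≤ 1) (n : ℕ) :
    ces (-α) n ≤ ((n : ℝ) + 1) ^ (-α) := by
  induction n with
  | zero => simp [ces]
  | succ n ih =>
    have hn : (0 : ℝ) < (n : ℝ) + 1 := by positivity
    have hb := rpow_one_add_le_one_add_mul_self (s := 1 / ((n : ℝ) + 1))
      (by linarith [one_div_pos.2 hn]) h0 h1
    have e : 1 + 1 / ((n : ℝ) + 1) = ((n : ℝ) + 1 + 1) / ((n : ℝ) + 1) := by field_simp
    rw [e, Real.div_rpow (by positivity) hn.le] at hb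
    set x := ((n : ℝ) + 1) ^ α with hx
    set y := ((n : ℝ) + 1 + 1) ^ α with hy
    have hx0 : 0 < x := Real.rpow_pos_of_pos hn α
    have hy0 : 0 < y := Real.rpow_pos_of_pos (by positivity) α
    set t := 1 / ((n : ℝ) + 1) with ht
    have ht0 : 0 < t := one_div_pos.2 hn
    have ht1 : t ≤ 1 := by
      rw [ht, div_le_one hn]; linarith [Nat.cast_nonneg (α := ℝ) n]
    rw [Real.rpow_neg hn.le] at ih
    rw [ces_succ, Nat.cast_succ, Real.rpow_neg (by positivity), ← hy]
    have e2 : (-α + n + 1) / ((n : ℝ) + 1) = 1 - α * t := by rw [ht]; field_simp; ring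
    have hαt : α * t ≤ 1 := by nlinarith
    rw [e2]
    calc ces (-α) n * (1 - α * t) ≤ x⁻¹ * (1 - α * t) := by
          gcongr
      _ = y⁻¹ * ((y / x) * (1 - α * t)) := by field_simp
      _ ≤ y⁻¹ * ((1 + α * t) * (1 - α * t)) := by
          gcongr
      _ ≤ y⁻¹ * 1 := by
          gcongr; nlinarith [sq_nonneg (α * t)]
      _ = y⁻¹ := mul_one _

theorem abs_ces_neg_sub_one_succ_le {α : ℝ} (h0 : 0 ≤ α) (h1 : α ≤ 1) (n : ℕ) :
    |ces (-α - 1) (n + 1)| ≤ ((n : ℝ) + 1) ^ (-α - 1) := by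
  have hn : (0 : ℝ) < (n : ℝ) + 1 := by positivity
  rw [ces_sub_one_succ, abs_mul, abs_of_nonneg (ces_neg_nonneg h1 n), abs_div, abs_neg,
    abs_of_nonneg h0, abs_of_pos hn, Real.rpow_sub_one hn.ne', div_mul_eq_mul_div]
  gcongr
  calc α * ces (-α) n ≤ 1 * ces (-α) n := by gcongr; exact ces_neg_nonneg h1 n
    _ ≤ _ := by rw [one_mul]; exact ces_neg_le_rpow h0 h1 n

theorem one_add_log_le_rpow {ε x : ℝ} (hε : 0 < ε) (hx : 1 ≤ x) :
    1 + Real.log x ≤ (1 + 1 / ε) * x ^ ε := by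
  have h1 := Real.log_le_rpow_div (by linarith : 0 ≤ x) hε
  have h2 := Real.one_le_rpow hx hε.le
  calc 1 + Real.log x ≤ x ^ ε + x ^ ε / ε := add_le_add h2 h1
    _ = _ := by ring

/-! ### Kernel estimate -/

/-- Comparison of a weighted sum of tensor squares with its last term. -/
theorem sum_mul_mul_eq_sub {R : Type*} [CommRing R] (w f g : ℕ → R) (n : ℕ) :
    ∑ i ∈ Icc 1 (n + 1), w (n + 1 - i) * f i * g i =
      (∑ k ∈ range (n + 1), w k) * (f (n + 1) * g (n + 1)) -
        ∑ k ∈ range n, w (k + 1) * ((f (n + 1) - f (n - k)) * g (n + 1) +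
          f (n - k) * (g (n + 1) - g (n - k))) := by
  have e : ∑ i ∈ Icc 1 (n + 1), w (n + 1 - i) * f i * g i =
      ∑ k ∈ range (n + 1), w k * f (n + 1 - k) * g (n + 1 - k) := by
    refine Finset.sum_nbij' (fun i => n + 1 - i) (fun k => n + 1 - k) ?_ ?_ ?_ ?_ ?_
    · intro i hi; simp only [mem_Icc, mem_range] at hi ⊢; omega
    · intro i hi; simp only [mem_Icc, mem_range] at hi ⊢; omega
    · intro i hi; simp only [mem_Icc] at hi; omega
    · intro i hi; simp only [mem_range] at hi; omega
    · intro i hi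
      simp only [mem_Icc] at hi
      rw [show n + 1 - (n + 1 - i) = i by omega]
  rw [e, Finset.sum_range_succ', Finset.sum_range_succ', add_mul, Finset.sum_mul,
    add_sub_right_comm, ← Finset.sum_sub_distrib]
  congr 1
  · refine Finset.sum_congr rfl fun k _ => ?_
    rw [Nat.add_sub_add_right]
    ring
  · simp [mul_assoc]

theorem measurable_enorm_prod_mul {X : Type*} [MeasurableSpace X] {f g : X → ℂ}
    (hf : Measurable f) (hg : Measurable g) : Measurable fun z : X × X => ‖f z.1 * g z.2‖ₑ :=
  ((hf.comp measurable_fst).mul (hg.comp measurable_snd)).enorm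

theorem lintegral_enorm_prod_mul {X : Type*} [MeasurableSpace X] (μ : Measure X) [SFinite μ]
    {f g : X → ℂ} (hf : Measurable f) (hg : Measurable g) :
    ∫⁻ z : X × X, ‖f z.1 * g z.2‖ₑ ∂(μ.prod μ) = (∫⁻ x, ‖f x‖ₑ ∂μ) * ∫⁻ x, ‖g x‖ₑ ∂μ := by
  simp only [enorm_mul]
  exact lintegral_prod_mul hf.enorm.aemeasurable hg.enorm.aemeasurable

theorem lintegral_enorm_prod_mul_add_le {X : Type*} [MeasurableSpace X] (μ : Measure X) [SFinite μ]
    {d g h : X → ℂ} (hd : Measurable d) (hg : Measurable g) (hh : Measurable h) {a b : ℝ}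
    (ha : 0 ≤ a) (hb : 0 ≤ b) (hda : ∫⁻ x, ‖d x‖ₑ ∂μ ≤ ENNReal.ofReal a)
    (hgb : ∫⁻ x, ‖g x‖ₑ ∂μ ≤ ENNReal.ofReal b) (hhb : ∫⁻ x, ‖h x‖ₑ ∂μ ≤ ENNReal.ofReal b) :
    ∫⁻ z : X × X, ‖d z.1 * g z.2‖ₑ + ‖h z.1 * d z.2‖ₑ ∂(μ.prod μ) ≤
      ENNReal.ofReal (2 * (a * b)) := by
  rw [lintegral_add_left (measurable_enorm_prod_mul hd hg), lintegral_enorm_prod_mul μ hd hg, lintegral_enorm_prod_mul μ hh hd,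
    two_mul, ENNReal.ofReal_add (mul_nonneg ha hb) (mul_nonneg ha hb), ENNReal.ofReal_mul ha]
  refine add_le_add (mul_le_mul' hda hgb) ?_
  rw [mul_comm]
  exact mul_le_mul' hda hhb

/-- `L¹` bound for a weighted sum of tensor squares, from `L¹` bounds for the functions and for
their increments. -/
theorem lintegral_sum_mul_mul_le {X : Type*} [MeasurableSpace X] (μ : Measure X) [SFinite μ]
    {f : ℕ → X → ℂ} (hf : ∀ i, Measurable (f i)) (w : ℕ → ℝ) {B : ℕ → ℝ} (hB : ∀ k, 0 ≤ B k)
    (hfB : ∀ i, ∫⁻ x, ‖f i x‖ₑ ∂μ ≤ ENNReal.ofReal (B i))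
    (hinc : ∀ a k, ∫⁻ x, ‖f (a + k) x - f a x‖ₑ ∂μ ≤ ENNReal.ofReal (B k))
    (hmono : ∀ i j, 1 ≤ i → i ≤ j → B i ≤ B j) (n : ℕ) :
    ∫⁻ z : X × X, ‖∑ i ∈ Icc 1 (n + 1), (w (n + 1 - i) : ℂ) * f i z.1 * f i z.2‖ₑ ∂(μ.prod μ) ≤
      ENNReal.ofReal (|∑ k ∈ range (n + 1), w k| * B (n + 1) ^ 2 +
        ∑ k ∈ range n, |w (k + 1)| * (2 * (B (k + 1) * B (n + 1)))) := by
  have habs (r : ℝ) : ‖(r : ℂ)‖ₑ = ENNReal.ofReal |r| := by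
    rw [← ofReal_norm, Complex.norm_real, Real.norm_eq_abs]
  obtain ⟨δ, hδ⟩ : ∃ δ : ℕ → X → ℂ, ∀ k, δ k = fun x => f (n + 1) x - f (n - k) x :=
    ⟨_, fun _ => rfl⟩
  have hδm (k) : Measurable (δ k) := by
    rw [hδ]
    exact (hf (n + 1)).sub (hf (n - k))
  obtain ⟨F, hFdef⟩ : ∃ F : ℕ → X × X → ℝ≥0∞, ∀ k, F k = fun z =>
      ‖δ k z.1 * f (n + 1) z.2‖ₑ + ‖f (n - k) z.1 * δ k z.2‖ₑ := ⟨_, fun _ => rfl⟩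
  have hF (k) : Measurable (F k) := by
    rw [hFdef]
    exact (measurable_enorm_prod_mul (hδm k) (hf (n + 1))).add
      (measurable_enorm_prod_mul (hf (n - k)) (hδm k))
  have hFint (k) (hk : k ∈ range n) :
      ∫⁻ z, F k z ∂(μ.prod μ) ≤ ENNReal.ofReal (2 * (B (k + 1) * B (n + 1))) := by
    have hkn := Finset.mem_range.1 hk
    have hd : ∫⁻ x, ‖δ k x‖ₑ ∂μ ≤ ENNReal.ofReal (B (k + 1)) := by
      have h := hinc (n - k) (k + 1)
      rw [show n - k + (k + 1) = n + 1 by omega] at h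
      rw [hδ]
      exact h
    rw [hFdef]
    exact lintegral_enorm_prod_mul_add_le μ (hδm k) (hf (n + 1)) (hf (n - k)) (hB _) (hB _) hd
      (hfB (n + 1)) ((hfB (n - k)).trans
        (ENNReal.ofReal_le_ofReal (hmono _ _ (by omega) (by omega))))
  have hsq := measurable_enorm_prod_mul (hf (n + 1)) (hf (n + 1))
  calc ∫⁻ z : X × X, ‖∑ i ∈ Icc 1 (n + 1), (w (n + 1 - i) : ℂ) * f i z.1 * f i z.2‖ₑ ∂(μ.prod μ)
      ≤ ∫⁻ z : X × X, ENNReal.ofReal |∑ k ∈ range (n + 1), w k| *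
          ‖f (n + 1) z.1 * f (n + 1) z.2‖ₑ +
          ∑ k ∈ range n, ENNReal.ofReal |w (k + 1)| * F k z ∂(μ.prod μ) := by
        refine lintegral_mono fun z => ?_
        have h := sum_mul_mul_eq_sub (fun k => (w k : ℂ)) (fun i => f i z.1) (fun i => f i z.2) n
        dsimp only at h ⊢
        rw [h]
        refine enorm_sub_le.trans (add_le_add (le_of_eq ?_) ?_)
        · rw [enorm_mul, ← Complex.ofReal_sum, habs]
        · refine (enorm_sum_le _ _).trans (Finset.sum_le_sum fun k _ => ?_)
          rw [enorm_mul, habs, hFdef, hδ]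
          gcongr
          exact enorm_add_le _ _
    _ = ENNReal.ofReal |∑ k ∈ range (n + 1), w k| *
          ((∫⁻ x, ‖f (n + 1) x‖ₑ ∂μ) * ∫⁻ x, ‖f (n + 1) x‖ₑ ∂μ) +
          ∑ k ∈ range n, ENNReal.ofReal |w (k + 1)| * ∫⁻ z, F k z ∂(μ.prod μ) := by
        rw [lintegral_add_left (hsq.const_mul _),
          lintegral_const_mul _ hsq,
          lintegral_enorm_prod_mul μ (hf (n + 1)) (hf (n + 1)),
          lintegral_finsetSum _ fun k _ => (hF k).const_mul _]
        congr 1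
        exact Finset.sum_congr rfl fun k _ => lintegral_const_mul _ (hF k)
    _ ≤ ENNReal.ofReal |∑ k ∈ range (n + 1), w k| *
          (ENNReal.ofReal (B (n + 1)) * ENNReal.ofReal (B (n + 1))) +
          ∑ k ∈ range n, ENNReal.ofReal |w (k + 1)| *
            ENNReal.ofReal (2 * (B (k + 1) * B (n + 1))) := by
        have h1 := hfB (n + 1)
        gcongr with k hk
        exact hFint k hk
    _ = _ := by
        have hk (k : ℕ) : 0 ≤ 2 * (B (k + 1) * B (n + 1)) :=
          mul_nonneg zero_le_two (mul_nonneg (hB _) (hB _))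
        rw [ENNReal.ofReal_add (by positivity)
            (Finset.sum_nonneg fun k _ => mul_nonneg (abs_nonneg _) (hk k)),
          ENNReal.ofReal_mul (abs_nonneg _), pow_two, ENNReal.ofReal_mul (hB _),
          ENNReal.ofReal_sum_of_nonneg fun k _ => mul_nonneg (abs_nonneg _) (hk k)]
        simp only [ENNReal.ofReal_mul (abs_nonneg _)]

/-- logarithmic `L¹` bound for the negative-order Cesàro kernel. -/
theorem negative_cesaro_kernel_log_bound (m : ℕ → ℕ) (hm : ∀ k, 2 ≤ m k)
    (Λ : ℕ) (hΛ : ∀ k, m k ≤ Λ)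
    (μ : Measure (Vil m)) [IsProbabilityMeasure μ] [μ.IsAddLeftInvariant]
    (α : ℝ) (hα : α ∈ Set.Ioo (0 : ℝ) 1) :
    ∃ c : ℝ, 0 < c ∧ ∀ n : ℕ, 2 ≤ n →
      ∫⁻ z : Vil m × Vil m,
          (‖∑ i ∈ Finset.Icc 1 n,
              ((ces (-α - 1) (n - i) : ℝ) : ℂ) * vD m i z.1 * vD m i z.2‖₊ : ℝ≥0∞)
          ∂(μ.prod μ) ≤ ENNReal.ofReal (c * Real.log n) := by
  obtain ⟨h0, h1⟩ := hα
  set P : ℝ := 4 * Λ + 3 with hP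
  have hP0 : 0 < P := by positivity
  set Q : ℝ := 1 + 1 / (α / 2) with hQ
  have hQ0 : 0 < Q := by positivity
  have hsum : Summable fun k : ℕ => (k : ℝ) ^ (-α / 2 - 1) :=
    Real.summable_nat_rpow.2 (by linarith)
  set S : ℝ := ∑' k : ℕ, (k : ℝ) ^ (-α / 2 - 1) with hS
  have hS0 : 0 ≤ S := tsum_nonneg fun k => Real.rpow_nonneg (Nat.cast_nonneg k) _
  have hrpow (k : ℕ) (hk : 1 ≤ k) : 1 + Real.log k ≤ Q * (k : ℝ) ^ (α / 2) :=
    one_add_log_le_rpow (by linarith) (by exact_mod_cast hk)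
  refine ⟨2 * (P * Q) ^ 2 + 6 * P ^ 2 * Q * S, by positivity, fun n hn => ?_⟩
  obtain ⟨n, rfl⟩ : ∃ l, n = l + 1 := ⟨n - 1, by omega⟩
  refine (lintegral_sum_mul_mul_le μ (measurable_vD m) (ces (-α - 1))
    (B := fun k => P * (1 + Real.log k))
    (fun k => mul_nonneg hP0.le (by linarith [Real.log_natCast_nonneg k]))
    (lintegral_vD_le_log hm hΛ μ)
    (lintegral_vD_add_sub_le_log hm hΛ μ)
    (fun i j hi hij => ?_) n).trans (ENNReal.ofReal_le_ofReal ?_)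
  · have hi' : (0 : ℝ) < i := by exact_mod_cast hi
    gcongr
  have hpos (k : ℕ) : (0 : ℝ) < (k : ℝ) + 1 := by positivity
  have hlog : 1 / 2 ≤ Real.log (n + 1 : ℕ) := by
    refine le_trans ?_ (Real.log_le_log zero_lt_two (by exact_mod_cast hn))
    linarith [Real.log_two_gt_d9]
  set L := Real.log (n + 1 : ℕ) with hL
  have hmain : |∑ k ∈ range (n + 1), ces (-α - 1) k| * (P * (1 + L)) ^ 2 ≤ (P * Q) ^ 2 := by
    rw [sum_ces_sub_one, abs_of_nonneg (ces_neg_nonneg h1.le n)]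
    have h := hrpow (n + 1) (by omega)
    calc ces (-α) n * (P * (1 + L)) ^ 2
        ≤ ((n : ℝ) + 1) ^ (-α) * (P * (Q * ((n + 1 : ℕ) : ℝ) ^ (α / 2))) ^ 2 := by
          have := ces_neg_le_rpow h0.le h1.le n
          gcongr
      _ = (P * Q) ^ 2 * (((n : ℝ) + 1) ^ (-α) *
            (((n : ℝ) + 1) ^ (α / 2) * ((n : ℝ) + 1) ^ (α / 2))) := by push_cast; ring
      _ = (P * Q) ^ 2 := by
          rw [← Real.rpow_add (hpos n), ← Real.rpow_add (hpos n),
            show -α + (α / 2 + α / 2) = 0 by ring, Real.rpow_zero, mul_one]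
  have htail : ∑ k ∈ range n, |ces (-α - 1) (k + 1)| *
      (2 * (P * (1 + Real.log (k + 1 : ℕ)) * (P * (1 + L)))) ≤
      2 * P ^ 2 * Q * (1 + L) * S := by
    calc _ ≤ ∑ k ∈ range n, 2 * P ^ 2 * Q * (1 + L) * ((k + 1 : ℕ) : ℝ) ^ (-α / 2 - 1) := by
          refine Finset.sum_le_sum fun k _ => ?_
          have h := hrpow (k + 1) (by omega)
          have hc := abs_ces_neg_sub_one_succ_le h0.le h1.le k
          have hlk := Real.log_natCast_nonneg (k + 1)
          calc _ ≤ ((k : ℝ) + 1) ^ (-α - 1) *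
                (2 * (P * (Q * ((k + 1 : ℕ) : ℝ) ^ (α / 2)) * (P * (1 + L)))) := by
                gcongr
            _ = 2 * P ^ 2 * Q * (1 + L) *
                (((k : ℝ) + 1) ^ (-α - 1) * ((k : ℝ) + 1) ^ (α / 2)) := by push_cast; ring
            _ = _ := by
                rw [← Real.rpow_add (hpos k), Nat.cast_succ]
                congr 2
                ring
      _ ≤ _ := by
          rw [← Finset.mul_sum]
          gcongr
          have hsum' := (summable_nat_add_iff 1).2 hsum
          refine (hsum'.sum_le_tsum (range n) fun k _ =>
            Real.rpow_nonneg (Nat.cast_nonneg _) _).trans ?_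
          have h := hsum.tsum_eq_zero_add
          have h' : (0 : ℝ) ≤ ((0 : ℕ) : ℝ) ^ (-α / 2 - 1) :=
            Real.rpow_nonneg (Nat.cast_nonneg _) _
          linarith
  refine (add_le_add hmain htail).trans ?_
  have hA : 0 ≤ (P * Q) ^ 2 := by positivity
  have hC : 0 ≤ 2 * P ^ 2 * Q * S := by positivity
  nlinarith [mul_le_mul_of_nonneg_left hlog hA, mul_le_mul_of_nonneg_left hlog hC]
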